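/- arXiv:0903.4292 — 2 statements merged into one kernel-verified Lean document; each statement's English description precedes it below -/
import Mathlib

section
/- Let 𝔤 be a real Lie algebra, V a real vector space with a right 𝔤-action (v,ξ) ↦ v·ξ, and 𝔰 = 𝔤 ⋉ V the semidirect product Lie algebra with bracket [(ξ₁,v₁),(ξ₂,v₂)] = ([ξ₁,ξ₂], v₁·ξ₂ − v₂·ξ₁). Let λ : 𝔤 → V* be a linear map satisfying the infinitesimal one-cocycle identity λ([ξ,η]) = λ(ξ)·η − λ(η)·ξ, where the right 𝔤-action on V* is defined by ⟨a·ξ, w⟩ := −⟨a, w·ξ⟩. Define Σ : 𝔰 × 𝔰 → ℝ by Σ((ξ,u),(η,w)) := ⟨λ(η), u⟩ − ⟨λ(ξ), w⟩. Then Σ is an alternating bilinear form on 𝔰 satisfying the Lie algebra two-cocycle identity Σ([x₁,x₂],x₃) + Σ([x₂,x₃],x₁) + Σ([x₃,x₁],x₂) = 0 for all x₁,x₂,x₃ ∈ 𝔰. -/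
/-- Let `𝔰 = 𝔤 ⋉ V` be the semidirect product Lie algebra with bracket
`[(ξ₁,v₁),(ξ₂,v₂)] = ([ξ₁,ξ₂], v₁·ξ₂ − v₂·ξ₁)`, where `v·ξ = β v ξ` is a right
`𝔤`-action on `V`, and let `lam : 𝔤 → V*` be a linear map satisfying the
infinitesimal one-cocycle identity `lam([ξ,η]) = lam(ξ)·η − lam(η)·ξ`, where
`(a·ξ)(w) = −a(w·ξ)`. Then `Sig((ξ,u),(η,w)) := ⟨lam(η),u⟩ − ⟨lam(ξ),w⟩` is an
alternating bilinear form on `𝔰` satisfying the Lie algebra two-cocycle identity. -/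
theorem infinitesimal_cocycle_gives_two_cocycle
    {𝔤 : Type*} [LieRing 𝔤] [LieAlgebra ℝ 𝔤]
    {V : Type*} [AddCommGroup V] [Module ℝ V]
    (β : V →ₗ[ℝ] 𝔤 →ₗ[ℝ] V)
    (hβ : ∀ (v : V) (ξ η : 𝔤), β v ⁅ξ, η⁆ = β (β v ξ) η - β (β v η) ξ)
    (lam : 𝔤 →ₗ[ℝ] Module.Dual ℝ V)
    (hlam : ∀ (ξ η : 𝔤) (w : V),
      lam ⁅ξ, η⁆ w = (-(lam ξ (β w η))) - (-(lam η (β w ξ)))) :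
    ∀ (br : (𝔤 × V) → (𝔤 × V) → (𝔤 × V)) (Sig : (𝔤 × V) → (𝔤 × V) → ℝ),
      (br = fun x y => (⁅x.1, y.1⁆, β x.2 y.1 - β y.2 x.1)) →
      (Sig = fun x y => lam y.1 x.2 - lam x.1 y.2) →
      (∀ (r : ℝ) (x x' y : 𝔤 × V), Sig (r • x + x') y = r * Sig x y + Sig x' y) ∧
      (∀ (r : ℝ) (x y y' : 𝔤 × V), Sig x (r • y + y') = r * Sig x y + Sig x y') ∧
      (∀ x : 𝔤 × V, Sig x x = 0) ∧
      (∀ x₁ x₂ x₃ : 𝔤 × V,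
        Sig (br x₁ x₂) x₃ + Sig (br x₂ x₃) x₁ + Sig (br x₃ x₁) x₂ = 0) := by
  rintro br Sig rfl rfl
  refine ⟨fun r x x' y => ?_, fun r x y y' => ?_, fun x => sub_self _, fun x₁ x₂ x₃ => ?_⟩
  · simp only [Prod.fst_add, Prod.snd_add, Prod.smul_fst, Prod.smul_snd, map_add, map_smul,
      LinearMap.add_apply, LinearMap.smul_apply, smul_eq_mul]
    ring
  · simp only [Prod.fst_add, Prod.snd_add, Prod.smul_fst, Prod.smul_snd, map_add, map_smul,
      LinearMap.add_apply, LinearMap.smul_apply, smul_eq_mul]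
    ring
  · -- The one-cocycle identity turns every summand into terms `⟨lam ξᵢ, vⱼ·ξₖ⟩` with `i, j, k`
    -- distinct; over the cyclic sum each of the six occurs twice, with opposite signs.
    simp only [hlam, map_sub]
    ring
end

section
/- Let η, ξ : ℝᵈ → ℝᵈ be C¹ diffeomorphisms, and for a C¹ diffeomorphism φ let J(φ)(x) := det(Dφ(x)) denote its Jacobian determinant. Let a ∈ ℝ, a ≠ 0, and let ρ₀, n₀ : ℝᵈ → ℝ satisfy a ρ₀ + n₀ = 0. Define the advected densities ρ := J(η⁻¹)·(ρ₀ ∘ η⁻¹) and n := J(ξ⁻¹)·(n₀ ∘ ξ⁻¹). Then a ρ + n = 0 (identically on ℝᵈ) if and only if J(ξ⁻¹∘η)·(n₀ ∘ (ξ⁻¹∘η)) = n₀, i.e. if and only if the diffeomorphism ξ⁻¹∘η fixes the density n₀. -/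
/-!
Since `a ρ₀ = -n₀`, the constraint at `y = η x` reads
`J(ξ⁻¹)(η x) n₀(ξ⁻¹(η x)) = J(η⁻¹)(η x) n₀(x)`. Multiplying by `J(η)(x)`, which by the chain rule
is the reciprocal of `J(η⁻¹)(η x)`, turns it into the invariance of `n₀` under `ξ⁻¹ ∘ η` at `x`.
-/

/-- Advection and relabeling in Hall magnetohydrodynamics: let `η, ξ` be `C¹`
diffeomorphisms of `ℝᵈ` with `C¹` inverses `η', ξ'`, let `J(φ)(x) = det(Dφ(x))` denote
the Jacobian determinant, let `a ≠ 0` and `ρ₀, n₀ : ℝᵈ → ℝ` with `a ρ₀ + n₀ = 0`, and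
define the advected densities `ρ = J(η⁻¹)·(ρ₀∘η⁻¹)` and `n = J(ξ⁻¹)·(n₀∘ξ⁻¹)`. Then
`a ρ + n = 0` identically if and only if `ξ⁻¹∘η` fixes the density `n₀`, i.e.
`J(ξ⁻¹∘η)·(n₀∘(ξ⁻¹∘η)) = n₀`. -/
theorem hall_mhd_relabeling
    {d : ℕ}
    (η η' ξ ξ' : EuclideanSpace ℝ (Fin d) → EuclideanSpace ℝ (Fin d))
    (hη : ContDiff ℝ 1 η) (hη' : ContDiff ℝ 1 η')
    (hξ : ContDiff ℝ 1 ξ) (hξ' : ContDiff ℝ 1 ξ')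
    (hη₁ : Function.LeftInverse η' η) (hη₂ : Function.RightInverse η' η)
    (hξ₁ : Function.LeftInverse ξ' ξ) (hξ₂ : Function.RightInverse ξ' ξ)
    (a : ℝ) (ha : a ≠ 0) (ρ₀ n₀ : EuclideanSpace ℝ (Fin d) → ℝ)
    (h₀ : ∀ x, a * ρ₀ x + n₀ x = 0) :
    ∀ J : (EuclideanSpace ℝ (Fin d) → EuclideanSpace ℝ (Fin d)) →
        EuclideanSpace ℝ (Fin d) → ℝ,
      (J = fun φ x => (fderiv ℝ φ x).det) →
      ((∀ y, a * (J η' y * ρ₀ (η' y)) + J ξ' y * n₀ (ξ' y) = 0) ↔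
        ∀ x, J (ξ' ∘ η) x * n₀ ((ξ' ∘ η) x) = n₀ x) := by
  rintro J rfl
  have chain (f g : EuclideanSpace ℝ (Fin d) → EuclideanSpace ℝ (Fin d))
      (hf : ContDiff ℝ 1 f) (hg : ContDiff ℝ 1 g) (x : EuclideanSpace ℝ (Fin d)) :
      (fderiv ℝ (f ∘ g) x).det = (fderiv ℝ f (g x)).det * (fderiv ℝ g x).det := by
    rw [fderiv_comp x (hf.differentiable one_ne_zero _) (hg.differentiable one_ne_zero _)]
    exact LinearMap.det_comp _ _
  have hinv (x : EuclideanSpace ℝ (Fin d)) :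
      (fderiv ℝ η' (η x)).det * (fderiv ℝ η x).det = 1 := by
    rw [← chain η' η hη' hη, hη₁.comp_eq_id, fderiv_id]
    exact LinearMap.det_id
  -- Surjectivity of `η` lets both sides be quantified over `x` with `y = η x`.
  rw [hη₂.surjective.forall]
  refine forall_congr' fun x => ?_
  simp only [chain ξ' η hξ' hη, Function.comp_apply, hη₁ x]
  have hx := h₀ x
  have hJ := hinv x
  constructor
  · intro h
    linear_combination (fderiv ℝ η x).det * h
      - (fderiv ℝ η' (η x)).det * (fderiv ℝ η x).det * hx + n₀ x * hJ
  · intro h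
    linear_combination (fderiv ℝ η' (η x)).det * h + (fderiv ℝ η' (η x)).det * hx
      - (fderiv ℝ ξ' (η x)).det * n₀ (ξ' (η x)) * hJ
end
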